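/- Suppose {u_θ} and {v_θ} are linearly independent families spanning H and K, and there exists a completely positive unital map Λ with Λ(|u_θ⟩⟨u_θ|) = |v_θ⟩⟨v_θ| for all θ. Then for every subset Θ₁ ⊆ Θ, det([G_U]_{Θ₁,Θ₁}) ≥ det([G_V]_{Θ₁,Θ₁}), where [G]_{Θ₁,Θ₁} denotes the principal submatrix indexed by Θ₁. -/

import Mathlib

open Matrix Finset
open scoped ComplexOrder

noncomputable section

/-- The rank-one operator `|u⟩⟨u|` as a matrix: `(outer u) i j = u i * conj (u j)`. -/
def outer {n : ℕ} (u : Fin n → ℂ) : Matrix (Fin n) (Fin n) ℂ :=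
  Matrix.vecMulVec u (star u)

/-- A linear map on matrices is completely positive iff it admits a Kraus representation. -/
def IsCPMap {n m : ℕ}
    (Λ : Matrix (Fin n) (Fin n) ℂ →ₗ[ℂ] Matrix (Fin m) (Fin m) ℂ) : Prop :=
  ∃ (k : ℕ) (W : Fin k → Matrix (Fin m) (Fin n) ℂ),
    ∀ X, Λ X = ∑ i, W i * X * (W i)ᴴ

/-- `Λ` is unital: `Λ(I) = I`. -/
def IsUnital {n m : ℕ}
    (Λ : Matrix (Fin n) (Fin n) ℂ →ₗ[ℂ] Matrix (Fin m) (Fin m) ℂ) : Prop :=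
  Λ 1 = 1

/-- `Λ` is subunital: `Λ(I) ≤ I` in the Loewner order. -/
def IsSubunital {n m : ℕ}
    (Λ : Matrix (Fin n) (Fin n) ℂ →ₗ[ℂ] Matrix (Fin m) (Fin m) ℂ) : Prop :=
  ((1 : Matrix (Fin m) (Fin m) ℂ) - Λ 1).PosSemidef

/-- Gram matrix of a family of vectors. -/
def gram {Θ : Type*} {n : ℕ} (u : Θ → (Fin n → ℂ)) : Matrix Θ Θ ℂ :=
  Matrix.of fun θ θ' => star (u θ) ⬝ᵥ u θ'

/-- Largest real eigenvalue of a matrix (intended for Hermitian matrices). -/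
def lamMax {n : ℕ} (A : Matrix (Fin n) (Fin n) ℂ) : ℝ :=
  sSup {r : ℝ | ∃ x : Fin n → ℂ, x ≠ 0 ∧ A.mulVec x = (r : ℂ) • x}

/-- Smallest real eigenvalue of a matrix (intended for Hermitian matrices). -/
def lamMin {n : ℕ} (A : Matrix (Fin n) (Fin n) ℂ) : ℝ :=
  sInf {r : ℝ | ∃ x : Fin n → ℂ, x ≠ 0 ∧ A.mulVec x = (r : ℂ) • x}

/-- Operator (spectral) norm of a matrix. -/
def opNorm {n : ℕ} (A : Matrix (Fin n) (Fin n) ℂ) : ℝ :=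
  ‖Matrix.toEuclideanCLM (𝕜 := ℂ) A‖

/-
The determinant of a Gram matrix is the product of the squared norms of the Gram–Schmidt vectors,
so it suffices that each Gram–Schmidt vector `y` of `v` is no longer than the corresponding `x` of
`u`. If `y` arises at `v t`, then `φ X = ⟨y, Λ(X) y⟩` is a positive functional, say
`φ X = tr (ρ X)` with `ρ ≥ 0`, and it vanishes on `|u s⟩⟨u s|` for `s < t` because `y` is orthogonal
to `v s`. Hence `ρ` kills `span {u s | s < t}`, which contains `u t - x`, and
`‖y‖⁴ = φ |u t⟩⟨u t| = φ |x⟩⟨x| ≤ ‖x‖² φ(1) ≤ ‖x‖² ‖y‖²`.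
-/

open InnerProductSpace

section GramDeterminant

variable {𝕜 E ι : Type*} [RCLike 𝕜] [NormedAddCommGroup E] [InnerProductSpace 𝕜 E]

lemma gram_sum_smul {κ : Type*} [Fintype κ] (b : κ → E) (A : Matrix κ ι 𝕜) :
    Matrix.gram 𝕜 (fun i => ∑ k, A k i • b k) = Aᴴ * Matrix.gram 𝕜 b * A := by
  ext i j
  rw [Matrix.gram_apply, ← star_dotProduct_gram_mulVec, dotProduct_mulVec, Matrix.mul_apply]
  rfl

lemma gram_eq_diagonal_of_pairwise_inner_eq_zero [DecidableEq ι] {b : ι → E}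
    (hb : Pairwise fun i j => inner 𝕜 (b i) (b j) = 0) :
    Matrix.gram 𝕜 b = diagonal fun i => (‖b i‖ : 𝕜) ^ 2 := by
  ext i j
  obtain rfl | hij := eq_or_ne i j
  · simp [inner_self_eq_norm_sq_to_K]
  · simp [hb hij, hij]

variable [LinearOrder ι] [LocallyFiniteOrderBot ι] [WellFoundedLT ι]

lemma sub_gramSchmidt_mem_span_image_Iio (f : ι → E) (i : ι) :
    f i - gramSchmidt 𝕜 f i ∈ Submodule.span 𝕜 (f '' Set.Iio i) := by
  rw [← span_gramSchmidt_Iio, sub_eq_iff_eq_add'.2 (gramSchmidt_def'' 𝕜 f i)]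
  exact Submodule.sum_mem _ fun j hj => Submodule.smul_mem _ _ <|
    Submodule.subset_span <| Set.mem_image_of_mem _ <| Finset.mem_Iio.1 hj

lemma inner_gramSchmidt_self_right (f : ι → E) (i : ι) :
    inner 𝕜 (gramSchmidt 𝕜 f i) (f i) = (‖gramSchmidt 𝕜 f i‖ : 𝕜) ^ 2 := by
  have hzero : ∀ j ∈ Finset.Iio i, inner 𝕜 (gramSchmidt 𝕜 f i) (gramSchmidt 𝕜 f j) = 0 :=
    fun j hj => gramSchmidt_orthogonal 𝕜 f (Finset.mem_Iio.1 hj).ne'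
  rw [← inner_self_eq_norm_sq_to_K, ← sub_eq_zero, ← inner_sub_right,
    sub_eq_iff_eq_add'.2 (gramSchmidt_def'' 𝕜 f i), inner_sum]
  exact Finset.sum_eq_zero fun j hj => by rw [inner_smul_right, hzero j hj, mul_zero]

variable (𝕜) in
/-- The unitriangular matrix expressing a family in terms of its Gram–Schmidt orthogonalization:
column `i` holds the coefficients of `f i`. The entries below the diagonal vanish because
`gramSchmidt 𝕜 f j` is orthogonal to `f i` for `i < j`. If `gramSchmidt 𝕜 f j = 0`, the
off-diagonal entries of row `j` are `0` by the convention `x / 0 = 0`. -/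
def gramSchmidtCoeff (f : ι → E) : Matrix ι ι 𝕜 :=
  Matrix.of fun j i =>
    if j = i then 1 else inner 𝕜 (gramSchmidt 𝕜 f j) (f i) / (‖gramSchmidt 𝕜 f j‖ : 𝕜) ^ 2

lemma gramSchmidtCoeff_isUpperTriangular (f : ι → E) :
    (gramSchmidtCoeff 𝕜 f).IsUpperTriangular := by
  intro j i hij
  have hij' : i < j := hij
  simp [gramSchmidtCoeff, hij'.ne', gramSchmidt_inv_triangular 𝕜 f hij']

variable [Fintype ι]

lemma det_gramSchmidtCoeff (f : ι → E) : (gramSchmidtCoeff 𝕜 f).det = 1 := by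
  rw [det_of_isUpperTriangular (gramSchmidtCoeff_isUpperTriangular f)]
  simp [gramSchmidtCoeff]

lemma sum_gramSchmidtCoeff_smul_gramSchmidt (f : ι → E) (i : ι) :
    ∑ j, gramSchmidtCoeff 𝕜 f j i • gramSchmidt 𝕜 f j = f i := by
  have hsupport : ∀ j ∉ Finset.Iic i, gramSchmidtCoeff 𝕜 f j i • gramSchmidt 𝕜 f j = 0 := by
    intro j hj
    have hij : i < j := by simpa using hj
    rw [gramSchmidtCoeff_isUpperTriangular f hij, zero_smul]
  rw [← Finset.sum_subset (Finset.subset_univ _) fun j _ => hsupport j, ← Finset.Iio_insert,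
    Finset.sum_insert (by simp)]
  conv_rhs => rw [gramSchmidt_def'' 𝕜 f i]
  congr 1
  · simp [gramSchmidtCoeff]
  · refine Finset.sum_congr rfl fun j hj => ?_
    simp [gramSchmidtCoeff, (Finset.mem_Iio.1 hj).ne]

theorem det_gram_eq_prod_norm_gramSchmidt_sq (f : ι → E) :
    (Matrix.gram 𝕜 f).det = ∏ i, (‖gramSchmidt 𝕜 f i‖ : 𝕜) ^ 2 := by
  have hgram : Matrix.gram 𝕜 f = (gramSchmidtCoeff 𝕜 f)ᴴ *
      diagonal (fun i => (‖gramSchmidt 𝕜 f i‖ : 𝕜) ^ 2) * gramSchmidtCoeff 𝕜 f := by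
    rw [← gram_eq_diagonal_of_pairwise_inner_eq_zero (gramSchmidt_pairwise_orthogonal 𝕜 f),
      ← gram_sum_smul]
    simp only [sum_gramSchmidtCoeff_smul_gramSchmidt]
  rw [hgram, det_mul, det_mul, det_conjTranspose, det_gramSchmidtCoeff, det_diagonal]
  simp

end GramDeterminant

section VectorFunctional

variable {𝕜 n : Type*} [RCLike 𝕜] [Fintype n]

/-- The linear functional `X ↦ ⟨y, X y⟩` on square matrices determined by a vector `y`. -/
def vectorFunctional (y : EuclideanSpace 𝕜 n) : Matrix n n 𝕜 →ₗ[𝕜] 𝕜 where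
  toFun X := star y.ofLp ⬝ᵥ X *ᵥ y.ofLp
  map_add' X Y := by rw [add_mulVec, dotProduct_add]
  map_smul' c X := by rw [smul_mulVec, dotProduct_smul, RingHom.id_apply]

lemma vectorFunctional_apply (y : EuclideanSpace 𝕜 n) (X : Matrix n n 𝕜) :
    vectorFunctional y X = star y.ofLp ⬝ᵥ X *ᵥ y.ofLp := rfl

lemma vectorFunctional_nonneg (y : EuclideanSpace 𝕜 n) {X : Matrix n n 𝕜} (hX : X.PosSemidef) :
    0 ≤ vectorFunctional y X :=
  hX.dotProduct_mulVec_nonneg y.ofLp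

lemma vectorFunctional_vecMulVec (x y : EuclideanSpace 𝕜 n) :
    vectorFunctional y (vecMulVec x.ofLp (star x.ofLp)) = (‖inner 𝕜 y x‖ : 𝕜) ^ 2 := by
  have hxy : star y.ofLp ⬝ᵥ x.ofLp = inner 𝕜 y x := dotProduct_comm _ _
  have hyx : star x.ofLp ⬝ᵥ y.ofLp = inner 𝕜 x y := dotProduct_comm _ _
  rw [vectorFunctional_apply, vecMulVec_mulVec, hyx, dotProduct_smul, hxy, ← inner_conj_symm x y,
    op_smul_eq_mul, RCLike.mul_conj]

variable [DecidableEq n]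

lemma vectorFunctional_one (y : EuclideanSpace 𝕜 n) :
    vectorFunctional y 1 = (‖y‖ : 𝕜) ^ 2 := by
  rw [vectorFunctional_apply, one_mulVec, ← inner_self_eq_norm_sq_to_K,
    EuclideanSpace.inner_eq_star_dotProduct, dotProduct_comm]

lemma posSemidef_norm_sq_smul_one_sub_vecMulVec (x : EuclideanSpace 𝕜 n) :
    ((‖x‖ : 𝕜) ^ 2 • (1 : Matrix n n 𝕜) - vecMulVec x.ofLp (star x.ofLp)).PosSemidef := by
  refine .of_dotProduct_mulVec_nonneg ?_ fun z => ?_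
  · simp [Matrix.IsHermitian, conjTranspose_vecMulVec]
  · change 0 ≤ vectorFunctional (WithLp.toLp 2 z) _
    rw [map_sub, map_smul, vectorFunctional_one, vectorFunctional_vecMulVec, smul_eq_mul,
      sub_nonneg, ← mul_pow, mul_comm]
    exact_mod_cast pow_le_pow_left₀ (norm_nonneg _) (norm_inner_le_norm (WithLp.toLp 2 z) x) 2

end VectorFunctional

section PositiveFunctional

variable {n : Type*} {φ : Matrix n n ℂ →ₗ[ℂ] ℂ}

lemma posSemidef_of_forall_vectorFunctional_nonneg [Fintype n] {A : Matrix n n ℂ}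
    (hA : ∀ z, 0 ≤ vectorFunctional z A) : A.PosSemidef := by
  classical
  rw [← isPositive_toEuclideanLin_iff, LinearMap.isPositive_iff_complex]
  intro z
  have hstar : inner ℂ (toEuclideanLin A z) z = star (vectorFunctional z A) := by
    rw [vectorFunctional_apply, star_dotProduct, star_star]
    exact dotProduct_comm _ _
  have hnonneg : 0 ≤ inner ℂ (toEuclideanLin A z) z := hstar ▸ star_nonneg_iff.2 (hA z)
  obtain ⟨hre, him⟩ := Complex.nonneg_iff.1 hnonneg
  exact ⟨Complex.ext rfl him, hre⟩

lemma exists_posSemidef_vectorFunctional_eq [Fintype n]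
    (hφ : ∀ X : Matrix n n ℂ, X.PosSemidef → 0 ≤ φ X) :
    ∃ ρ : Matrix n n ℂ, ρ.PosSemidef ∧
      ∀ z, vectorFunctional z ρ = φ (vecMulVec z.ofLp (star z.ofLp)) := by
  classical
  let ρ : Matrix n n ℂ := Matrix.of fun i j => φ (single j i 1)
  have hρ (z : EuclideanSpace ℂ n) :
      vectorFunctional z ρ = φ (vecMulVec z.ofLp (star z.ofLp)) := by
    have hsingle (i j : n) (c : ℂ) : φ (single i j c) = c * ρ j i := by
      have hc : single i j c = c • single i j (1 : ℂ) := by rw [smul_single, smul_eq_mul, mul_one]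
      rw [hc, map_smul]
      rfl
    rw [matrix_eq_sum_single (vecMulVec _ _), Finset.sum_comm]
    simp only [map_sum, hsingle, vectorFunctional_apply, dotProduct, mulVec, Finset.mul_sum,
      vecMulVec_apply]
    exact Finset.sum_congr rfl fun i _ => Finset.sum_congr rfl fun j _ => by ring
  refine ⟨ρ, posSemidef_of_forall_vectorFunctional_nonneg fun z => ?_, hρ⟩
  exact hρ z ▸ hφ _ (posSemidef_vecMulVec_self_star z.ofLp)

lemma apply_vecMulVec_eq_of_sub_mem_span [Finite n]
    (hφ : ∀ X : Matrix n n ℂ, X.PosSemidef → 0 ≤ φ X)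
    {s : Set (EuclideanSpace ℂ n)} (hs : ∀ w ∈ s, φ (vecMulVec w.ofLp (star w.ofLp)) = 0)
    {x z : EuclideanSpace ℂ n} (hxz : x - z ∈ Submodule.span ℂ s) :
    φ (vecMulVec x.ofLp (star x.ofLp)) = φ (vecMulVec z.ofLp (star z.ofLp)) := by
  classical
  cases nonempty_fintype n
  obtain ⟨ρ, hρ, hφρ⟩ := exists_posSemidef_vectorFunctional_eq hφ
  have hspan : Submodule.span ℂ s ≤ LinearMap.ker (toEuclideanLin ρ) := by
    refine Submodule.span_le.2 fun w hw => ?_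
    have hρw : ρ *ᵥ w.ofLp = 0 :=
      (hρ.dotProduct_mulVec_zero_iff w.ofLp).1 ((hφρ w).trans (hs w hw))
    exact congrArg (WithLp.toLp 2) hρw
  have hker : ρ *ᵥ (x - z).ofLp = 0 := congrArg WithLp.ofLp (hspan hxz)
  have hρx : ρ *ᵥ x.ofLp = ρ *ᵥ z.ofLp := by
    rwa [WithLp.ofLp_sub, mulVec_sub, sub_eq_zero] at hker
  rw [← hφρ, ← hφρ, vectorFunctional_apply, vectorFunctional_apply, hρx, dotProduct_mulVec,
    dotProduct_mulVec, ← hρ.1.eq, ← star_mulVec, ← star_mulVec, hρx]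

lemma apply_vecMulVec_le_norm_sq_mul_apply_one [Fintype n] [DecidableEq n]
    (hφ : ∀ X : Matrix n n ℂ, X.PosSemidef → 0 ≤ φ X) (x : EuclideanSpace ℂ n) :
    φ (vecMulVec x.ofLp (star x.ofLp)) ≤ (‖x‖ : ℂ) ^ 2 * φ 1 := by
  have h := hφ _ (posSemidef_norm_sq_smul_one_sub_vecMulVec x)
  rwa [map_sub, map_smul, smul_eq_mul, sub_nonneg] at h

end PositiveFunctional

section PositiveMap

/-- A linear map between matrix algebras is positive if it preserves positive semidefiniteness. -/
def IsPositiveMap {n m : Type*} (Λ : Matrix n n ℂ →ₗ[ℂ] Matrix m m ℂ) : Prop :=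
  ∀ ⦃X⦄, X.PosSemidef → (Λ X).PosSemidef

variable {n m : ℕ} {Λ : Matrix (Fin n) (Fin n) ℂ →ₗ[ℂ] Matrix (Fin m) (Fin m) ℂ}

lemma IsCPMap.isPositiveMap (hΛ : IsCPMap Λ) : IsPositiveMap Λ := by
  obtain ⟨k, W, hW⟩ := hΛ
  intro X hX
  rw [hW]
  exact posSemidef_sum _ fun i _ => hX.mul_mul_conjTranspose_same (W i)

lemma IsUnital.isSubunital (hΛ : IsUnital Λ) : IsSubunital Λ := by
  rw [IsSubunital, hΛ, sub_self]
  exact .zero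

lemma norm_le_norm_of_map_outer_eq (hpos : IsPositiveMap Λ) (hsub : IsSubunital Λ) {ι : Type*}
    {u : ι → EuclideanSpace ℂ (Fin n)} {v : ι → EuclideanSpace ℂ (Fin m)}
    (hconv : ∀ i, Λ (outer (u i).ofLp) = outer (v i).ofLp) {s : Set ι} {t : ι}
    {x : EuclideanSpace ℂ (Fin n)} {y : EuclideanSpace ℂ (Fin m)}
    (hx : u t - x ∈ Submodule.span ℂ (u '' s)) (hy : ∀ i ∈ s, inner ℂ y (v i) = 0)
    (hyt : inner ℂ y (v t) = (‖y‖ : ℂ) ^ 2) : ‖y‖ ≤ ‖x‖ := by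
  let φ : Matrix (Fin n) (Fin n) ℂ →ₗ[ℂ] ℂ := vectorFunctional y ∘ₗ Λ
  have hφ : ∀ X : Matrix (Fin n) (Fin n) ℂ, X.PosSemidef → 0 ≤ φ X :=
    fun X hX => vectorFunctional_nonneg y (hpos hX)
  have hφu (i : ι) : φ (outer (u i).ofLp) = (‖inner ℂ y (v i)‖ : ℂ) ^ 2 :=
    (congrArg (vectorFunctional y) (hconv i)).trans (vectorFunctional_vecMulVec (v i) y)
  have hφs : ∀ w ∈ u '' s, φ (vecMulVec w.ofLp (star w.ofLp)) = 0 := by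
    rintro _ ⟨i, hi, rfl⟩
    exact (hφu i).trans (by simp [hy i hi])
  have hφone : φ 1 ≤ (‖y‖ : ℂ) ^ 2 := by
    have h := vectorFunctional_nonneg y hsub
    rwa [map_sub, vectorFunctional_one, sub_nonneg] at h
  have hsq : (((‖y‖ ^ 2) ^ 2 : ℝ) : ℂ) ≤ ((‖x‖ ^ 2 * ‖y‖ ^ 2 : ℝ) : ℂ) := by
    push_cast
    calc ((‖y‖ : ℂ) ^ 2) ^ 2 = φ (outer (u t).ofLp) := by simp [hφu, hyt]
      _ = φ (vecMulVec x.ofLp (star x.ofLp)) := apply_vecMulVec_eq_of_sub_mem_span hφ hφs hx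
      _ ≤ (‖x‖ : ℂ) ^ 2 * φ 1 := apply_vecMulVec_le_norm_sq_mul_apply_one hφ x
      _ ≤ (‖x‖ : ℂ) ^ 2 * (‖y‖ : ℂ) ^ 2 := by gcongr
  rw [Complex.real_le_real] at hsq
  obtain hy0 | hy0 := (norm_nonneg y).eq_or_lt
  · exact hy0 ▸ norm_nonneg x
  · rw [sq (‖y‖ ^ 2)] at hsq
    exact le_of_sq_le_sq (le_of_mul_le_mul_right hsq (by positivity)) (norm_nonneg x)

theorem norm_gramSchmidt_le_of_map_outer_eq (hpos : IsPositiveMap Λ) (hsub : IsSubunital Λ)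
    {ι : Type*} [LinearOrder ι] [LocallyFiniteOrderBot ι] [WellFoundedLT ι]
    {u : ι → EuclideanSpace ℂ (Fin n)} {v : ι → EuclideanSpace ℂ (Fin m)}
    (hconv : ∀ i, Λ (outer (u i).ofLp) = outer (v i).ofLp) (i : ι) :
    ‖gramSchmidt ℂ v i‖ ≤ ‖gramSchmidt ℂ u i‖ :=
  norm_le_norm_of_map_outer_eq hpos hsub hconv (sub_gramSchmidt_mem_span_image_Iio u i)
    (fun _ hj => gramSchmidt_inv_triangular ℂ v hj) (inner_gramSchmidt_self_right v i)

lemma gram_eq_gram_toLp {ι : Type*} (u : ι → Fin n → ℂ) :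
    _root_.gram u = Matrix.gram ℂ fun i => WithLp.toLp 2 (u i) := by
  ext i j
  exact dotProduct_comm (star (u i)) (u j)

theorem det_gram_le_of_map_outer_eq (hpos : IsPositiveMap Λ) (hsub : IsSubunital Λ)
    {ι : Type*} [Fintype ι] [DecidableEq ι] {u : ι → Fin n → ℂ} {v : ι → Fin m → ℂ}
    (hconv : ∀ i, Λ (outer (u i)) = outer (v i)) :
    (_root_.gram v).det ≤ (_root_.gram u).det := by
  let e := (Fintype.equivFin ι).symm
  rw [← det_submatrix_equiv_self e (_root_.gram u), ← det_submatrix_equiv_self e (_root_.gram v),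
    gram_eq_gram_toLp, gram_eq_gram_toLp]
  change (Matrix.gram ℂ fun k => WithLp.toLp 2 (v (e k))).det ≤
    (Matrix.gram ℂ fun k => WithLp.toLp 2 (u (e k))).det
  rw [det_gram_eq_prod_norm_gramSchmidt_sq, det_gram_eq_prod_norm_gramSchmidt_sq]
  exact_mod_cast Finset.prod_le_prod (fun i _ => sq_nonneg _) fun i _ =>
    pow_le_pow_left₀ (norm_nonneg _)
      (norm_gramSchmidt_le_of_map_outer_eq hpos hsub (fun k => hconv (e k)) i) 2

end PositiveMap

theorem stmt5_general {Θ : Type*} [DecidableEq Θ] {n m : ℕ}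
    {u : Θ → (Fin n → ℂ)} {v : Θ → (Fin m → ℂ)}
    {Λ : Matrix (Fin n) (Fin n) ℂ →ₗ[ℂ] Matrix (Fin m) (Fin m) ℂ}
    (hpos : IsPositiveMap Λ) (hsub : IsSubunital Λ)
    (hconv : ∀ θ, Λ (outer (u θ)) = outer (v θ)) (S : Finset Θ) :
    ((gram v).submatrix (Subtype.val : {a // a ∈ S} → Θ) Subtype.val).det ≤
      ((gram u).submatrix (Subtype.val : {a // a ∈ S} → Θ) Subtype.val).det :=
  det_gram_le_of_map_outer_eq hpos hsub fun θ : {a // a ∈ S} => hconv θ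

theorem stmt5 {Θ : Type*} [Fintype Θ] [DecidableEq Θ] {n m : ℕ}
    (u : Θ → (Fin n → ℂ)) (v : Θ → (Fin m → ℂ))
    (hu : LinearIndependent ℂ u) (hv : LinearIndependent ℂ v)
    (hus : Submodule.span ℂ (Set.range u) = ⊤)
    (hvs : Submodule.span ℂ (Set.range v) = ⊤)
    (Λ : Matrix (Fin n) (Fin n) ℂ →ₗ[ℂ] Matrix (Fin m) (Fin m) ℂ)
    (hCP : IsCPMap Λ) (hUnital : IsUnital Λ)
    (hconv : ∀ θ, Λ (outer (u θ)) = outer (v θ)) :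
    ∀ S : Finset Θ,
      (((gram u).submatrix (Subtype.val : {a // a ∈ S} → Θ) Subtype.val).det).re ≥
        (((gram v).submatrix (Subtype.val : {a // a ∈ S} → Θ) Subtype.val).det).re :=
  fun S => (Complex.le_def.1 (stmt5_general hCP.isPositiveMap hUnital.isSubunital hconv S)).1
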